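/- arXiv:math/0508171 — 2 statements merged into one kernel-verified Lean document; each statement's English description precedes it below -/
import Mathlib

section
/- J̃ is the eigenprojection of L corresponding to the eigenvalue 0: ℝⁿ is the direct sum of the null space of L and the column space of L, and J̃ is the projection onto the null space of L along the column space of L (equivalently: J̃² = J̃, L J̃ = J̃ L = 0, the range of J̃ equals the null space of L, and the null space of J̃ equals the column space of L). -/
/-!
The whole statement follows from the recurrence `Q_{k+1} = σ_{k+1} I - Q_k L`
(`Qmat_mul_Lap`). Starting from `Q_0 = σ_0 I`, it shows that each `Q_k` commutes with `L` and has
the form `σ_k I - R L` with `R` commuting with `L` (`exists_Qmat_eq`). For the maximal number `m`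
of arcs, `Q_{m+1} = 0` and `σ_{m+1} = 0`, so `Q_m L = L Q_m = 0`, while `σ_m > 0`. Hence
`J̃ = I - R' L = I - L R'` and `J̃ L = L J̃ = 0`, which is exactly what characterizes the
eigenprojection of `L` at `0`.

The recurrence at the entry `(i, j)` amounts to evaluating
`∑_F ∑_u w(F) w_{uj} ([j in the tree of i] - [u in the tree of i])` over the forests `F` with `k`
arcs. A forest in which `j` is not a root is `H + (u, j)` for a unique forest `H` having `j` as a
root and a unique `u` not reachable from `j` in `H` (`sum_nonroot`). If `j` is not a root of
`F = H + (p, j)`, then only the `u` not reachable from `j` in `H` contribute, and for fixed `H`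
their contributions are antisymmetric in `(p, u)`, hence cancel. If `j` is a root of `F`, the pairs
`(F, u)` that contribute correspond to the forests `F + (u, j)` with `k + 1` arcs, and their total
is `δ_{ij} σ_{k+1} - Q_{k+1}(i, j)`.
-/

open Matrix Finset

namespace ForestMatrix

variable {n : ℕ}

/-- Reachability from `i` to `j` within a finite set `F` of arcs. -/
def FReach (F : Finset (Fin n × Fin n)) (i j : Fin n) : Prop :=
  Relation.ReflTransGen (fun a b => (a, b) ∈ F) i j

/-- `F` is (the arc set of) a spanning diverging forest (out-forest) of the digraph whose
positive arc weights are recorded in `W`: all arcs of `F` are arcs of the digraph, every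
vertex has indegree at most one, and there are no directed cycles. -/
def IsOutForest (W : Matrix (Fin n) (Fin n) ℝ) (F : Finset (Fin n × Fin n)) : Prop :=
  (∀ e ∈ F, 0 < W e.1 e.2) ∧
  (∀ v : Fin n, ({e ∈ F | e.2 = v} : Finset (Fin n × Fin n)).card ≤ 1) ∧
  (∀ v : Fin n, ¬ Relation.TransGen (fun a b => (a, b) ∈ F) v v)

/-- The weight of a (sub)digraph: the product of its arc weights. -/
noncomputable def wt (W : Matrix (Fin n) (Fin n) ℝ) (F : Finset (Fin n × Fin n)) : ℝ :=
  ∏ e ∈ F, W e.1 e.2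

/-- The weight of a set of digraphs: the sum of their weights. -/
noncomputable def wtSet (W : Matrix (Fin n) (Fin n) ℝ)
    (G : Finset (Finset (Fin n × Fin n))) : ℝ :=
  ∑ F ∈ G, wt W F

open scoped Classical in
/-- The set of all out-forests of the digraph with weight matrix `W`. -/
noncomputable def allOutForests (W : Matrix (Fin n) (Fin n) ℝ) :
    Finset (Finset (Fin n × Fin n)) :=
  Finset.univ.filter (fun F => IsOutForest W F)

open scoped Classical in
/-- The set of all out-forests with `k` arcs. -/
noncomputable def outForests (W : Matrix (Fin n) (Fin n) ℝ) (k : ℕ) :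
    Finset (Finset (Fin n × Fin n)) :=
  Finset.univ.filter (fun F => IsOutForest W F ∧ F.card = k)

/-- The number of arcs of a maximum out-forest; it equals `n - d'` where `d'` is the
out-forest dimension. -/
noncomputable def maxArcs (W : Matrix (Fin n) (Fin n) ℝ) : ℕ :=
  (allOutForests W).sup Finset.card

/-- `σ_k`: the total weight of the out-forests with `k` arcs. -/
noncomputable def sigma (W : Matrix (Fin n) (Fin n) ℝ) (k : ℕ) : ℝ :=
  wtSet W (outForests W k)

/-- `j` belongs to the tree of the forest `F` diverging from `i`:
`i` is a root of `F` and `j` is reachable from `i` in `F`. -/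
def inTreeOf (F : Finset (Fin n × Fin n)) (i j : Fin n) : Prop :=
  (∀ e ∈ F, e.2 ≠ i) ∧ FReach F i j

open scoped Classical in
/-- `Q_k`: the matrix of out-forests with `k` arcs; its `(i,j)` entry is the total weight of
the out-forests with `k` arcs in which `j` belongs to a tree diverging from `i`. -/
noncomputable def Qmat (W : Matrix (Fin n) (Fin n) ℝ) (k : ℕ) :
    Matrix (Fin n) (Fin n) ℝ :=
  fun i j => wtSet W ((outForests W k).filter (fun F => inTreeOf F i j))

/-- The column Laplacian matrix of the digraph with weight matrix `W`. -/
noncomputable def Lap (W : Matrix (Fin n) (Fin n) ℝ) : Matrix (Fin n) (Fin n) ℝ :=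
  fun i j => if i = j then ∑ k ∈ Finset.univ.erase i, W k i else -W i j

/-- `σ(τ) = Σ_{k=0}^{n-d'} σ_k τ^k`. -/
noncomputable def sigmaTau (W : Matrix (Fin n) (Fin n) ℝ) (τ : ℝ) : ℝ :=
  ∑ k ∈ Finset.range (maxArcs W + 1), sigma W k * τ ^ k

/-- `Q(τ) = Σ_{k=0}^{n-d'} Q_k τ^k`. -/
noncomputable def QTau (W : Matrix (Fin n) (Fin n) ℝ) (τ : ℝ) :
    Matrix (Fin n) (Fin n) ℝ :=
  ∑ k ∈ Finset.range (maxArcs W + 1), τ ^ k • Qmat W k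

/-- `J(τ) = σ(τ)⁻¹ Q(τ)`. -/
noncomputable def JTau (W : Matrix (Fin n) (Fin n) ℝ) (τ : ℝ) :
    Matrix (Fin n) (Fin n) ℝ :=
  (sigmaTau W τ)⁻¹ • QTau W τ

/-- `J̃ = σ_{n-d'}⁻¹ Q_{n-d'}`: the normalized matrix of maximum out-forests. -/
noncomputable def Jtil (W : Matrix (Fin n) (Fin n) ℝ) : Matrix (Fin n) (Fin n) ℝ :=
  (sigma W (maxArcs W))⁻¹ • Qmat W (maxArcs W)

/-- Reachability in the digraph with weight matrix `W`. -/
def Reach (W : Matrix (Fin n) (Fin n) ℝ) (i j : Fin n) : Prop :=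
  Relation.ReflTransGen (fun a b => 0 < W a b) i j

/-- `K` is a source knot of the digraph: `K` is the vertex set of a bicomponent
(a maximal strongly connected subgraph) and no arc enters `K` from outside. -/
def IsSourceKnot (W : Matrix (Fin n) (Fin n) ℝ) (K : Finset (Fin n)) : Prop :=
  (∃ i, ∀ j, j ∈ K ↔ (Reach W i j ∧ Reach W j i)) ∧
  (∀ j k, k ∈ K → 0 < W j k → j ∈ K)

/-! ### Trees of a forest after the insertion of an arc -/

/-- `j` is a root of `F`: no arc of `F` enters `j`. -/
def IsRoot (F : Finset (Fin n × Fin n)) (j : Fin n) : Prop := ∀ e ∈ F, e.2 ≠ j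

theorem IsOutForest.arc_unique {W : Matrix (Fin n) (Fin n) ℝ} {F : Finset (Fin n × Fin n)}
    (h : IsOutForest W F) {a b c : Fin n} (ha : (a, c) ∈ F) (hb : (b, c) ∈ F) : a = b := by
  have := Finset.card_le_one.1 (h.2.1 c) (a, c) (by simp [ha]) (b, c) (by simp [hb])
  simpa using this

theorem FReach.eq_of_isRoot {F : Finset (Fin n × Fin n)} {i j : Fin n} (h : FReach F i j)
    (hj : IsRoot F j) : i = j := by
  rcases Relation.ReflTransGen.cases_tail h with h | ⟨b, -, hb⟩
  · exact h.symm
  · exact absurd rfl (hj _ hb)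

/-- Every vertex is reachable from at most one root, because indegrees are at most one. -/
theorem root_unique {W : Matrix (Fin n) (Fin n) ℝ} {F : Finset (Fin n × Fin n)}
    (hF : IsOutForest W F) {i j v : Fin n} (hi : IsRoot F i) (hj : IsRoot F j)
    (hiv : FReach F i v) (hjv : FReach F j v) : i = j := by
  unfold FReach at hiv
  induction hiv with
  | refl => exact (hjv.eq_of_isRoot hi).symm
  | tail _ hbc ih =>
    rcases Relation.ReflTransGen.cases_tail hjv with h | ⟨b', hb', hb'c⟩
    · exact absurd h (hj _ hbc)
    · rw [hF.arc_unique hb'c hbc] at hb'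
      exact ih hb'

theorem fReach_insert {H : Finset (Fin n × Fin n)} {u j a v : Fin n} :
    FReach (insert (u, j) H) a v ↔ FReach H a v ∨ (FReach H a u ∧ FReach H j v) := by
  have mono : ∀ {x y}, FReach H x y → FReach (insert (u, j) H) x y := fun h =>
    Relation.ReflTransGen.mono (fun _ _ hxy => Finset.mem_insert_of_mem hxy) _ _ h
  constructor
  · intro h
    unfold FReach at h
    induction h with
    | refl => exact Or.inl .refl
    | tail _ hbc ih =>
      rcases Finset.mem_insert.1 hbc with hbc | hbc
      · obtain ⟨rfl, rfl⟩ := Prod.mk.inj hbc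
        exact Or.inr ⟨ih.elim id And.left, .refl⟩
      · exact ih.imp (fun h => h.tail hbc) (fun h => ⟨h.1, h.2.tail hbc⟩)
  · rintro (h | ⟨h1, h2⟩)
    · exact mono h
    · exact ((mono h1).tail (Finset.mem_insert_self _ _)).trans (mono h2)

theorem transGen_insert {H : Finset (Fin n × Fin n)} {u j a v : Fin n}
    (h : Relation.TransGen (fun a b => (a, b) ∈ insert (u, j) H) a v) :
    Relation.TransGen (fun a b => (a, b) ∈ H) a v ∨ (FReach H a u ∧ FReach H j v) := by
  induction h with
  | single hab =>
    rcases Finset.mem_insert.1 hab with hab | hab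
    · obtain ⟨rfl, rfl⟩ := Prod.mk.inj hab
      exact Or.inr ⟨.refl, .refl⟩
    · exact Or.inl (.single hab)
  | tail _ hbc ih =>
    rcases Finset.mem_insert.1 hbc with hbc | hbc
    · obtain ⟨rfl, rfl⟩ := Prod.mk.inj hbc
      exact Or.inr ⟨ih.elim (fun h => h.to_reflTransGen) And.left, .refl⟩
    · exact ih.imp (fun h => h.tail hbc) (fun h => ⟨h.1, h.2.tail hbc⟩)

/-- A new arc into a root `j` of `H` keeps `H` a forest iff its tail is not a descendant
of `j`. -/
theorem isOutForest_insert {W : Matrix (Fin n) (Fin n) ℝ} {H : Finset (Fin n × Fin n)}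
    {u j : Fin n} (hj : IsRoot H j) :
    IsOutForest W (insert (u, j) H) ↔ IsOutForest W H ∧ 0 < W u j ∧ ¬ FReach H j u := by
  constructor
  · rintro ⟨h1, h2, h3⟩
    refine ⟨⟨fun e he => h1 e (Finset.mem_insert_of_mem he), fun v => ?_, fun v hv => h3 v ?_⟩,
      h1 (u, j) (Finset.mem_insert_self _ _), fun h => h3 j ?_⟩
    · exact (Finset.card_le_card
        (Finset.filter_subset_filter _ (Finset.subset_insert _ _))).trans (h2 v)
    · exact Relation.TransGen.mono (fun _ _ hxy => Finset.mem_insert_of_mem hxy) _ _ hv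
    · exact Relation.TransGen.tail' (fReach_insert.2 (Or.inl h)) (Finset.mem_insert_self _ _)
  · rintro ⟨⟨h1, h2, h3⟩, hw, hr⟩
    refine ⟨fun e he => ?_, fun v => ?_, fun v hv => ?_⟩
    · rcases Finset.mem_insert.1 he with rfl | he
      · exact hw
      · exact h1 e he
    · rw [Finset.filter_insert]
      split_ifs with h
      · have hv : j = v := h
        subst hv
        rw [Finset.filter_eq_empty_iff.2 (fun e he => hj e he)]
        simp
      · exact h2 v
    · rcases transGen_insert hv with h | ⟨h, h'⟩
      · exact h3 v h
      · exact hr (h'.trans h)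

theorem isRoot_insert {H : Finset (Fin n × Fin n)} {u j i : Fin n} :
    IsRoot (insert (u, j) H) i ↔ j ≠ i ∧ IsRoot H i := by
  simp [IsRoot]

/-- After the arc `(u, j)` is added, the descendants of `j` join the tree of `u`. -/
theorem inTreeOf_insert_of_reach {W : Matrix (Fin n) (Fin n) ℝ} {H : Finset (Fin n × Fin n)}
    (hH : IsOutForest W H) {u j i v : Fin n} (hj : IsRoot H j) (hu : ¬ FReach H j u)
    (hv : FReach H j v) : inTreeOf (insert (u, j) H) i v ↔ inTreeOf H i u := by
  constructor
  · rintro ⟨h1, h2⟩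
    obtain ⟨hne, hi⟩ := isRoot_insert.1 h1
    rcases fReach_insert.1 h2 with h | h
    · exact absurd (root_unique hH hj hi hv h) hne
    · exact ⟨hi, h.1⟩
  · rintro ⟨h1, h2⟩
    refine ⟨isRoot_insert.2 ⟨?_, h1⟩, fReach_insert.2 (Or.inr ⟨h2, hv⟩)⟩
    rintro rfl
    exact hu h2

theorem inTreeOf_insert_of_not_reach {H : Finset (Fin n × Fin n)} {u j i v : Fin n}
    (hv : ¬ FReach H j v) : inTreeOf (insert (u, j) H) i v ↔ inTreeOf H i v := by
  constructor
  · rintro ⟨h1, h2⟩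
    exact ⟨(isRoot_insert.1 h1).2, (fReach_insert.1 h2).resolve_right fun h => hv h.2⟩
  · rintro ⟨h1, h2⟩
    refine ⟨isRoot_insert.2 ⟨?_, h1⟩, fReach_insert.2 (Or.inl h2)⟩
    rintro rfl
    exact hv h2

theorem inTreeOf_of_reach_root {W : Matrix (Fin n) (Fin n) ℝ} {H : Finset (Fin n × Fin n)}
    (hH : IsOutForest W H) {j i v : Fin n} (hj : IsRoot H j)
    (hv : FReach H j v) : inTreeOf H i v ↔ i = j := by
  constructor
  · rintro ⟨h1, h2⟩
    exact root_unique hH h1 hj h2 hv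
  · rintro rfl
    exact ⟨hj, hv⟩

/-! ### The recurrence for the forest matrices -/

open scoped Classical in
/-- The out-forests with `k - 1` arcs (none if `k = 0`) of which `j` is a root. -/
noncomputable def baseForests (W : Matrix (Fin n) (Fin n) ℝ) (k : ℕ) (j : Fin n) :
    Finset (Finset (Fin n × Fin n)) :=
  Finset.univ.filter (fun H => IsOutForest W H ∧ IsRoot H j ∧ H.card + 1 = k)

open scoped Classical in
/-- Forests with `k` arcs in which `j` is not a root are obtained, each exactly once, by adding to
a forest with root `j` an arc from a non-descendant of `j`. Tails `u` with `W u j = 0` may be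
included since their terms vanish. -/
theorem sum_nonroot {W : Matrix (Fin n) (Fin n) ℝ} (hW0 : ∀ i j, 0 ≤ W i j) (k : ℕ) (j : Fin n)
    (f : Finset (Fin n × Fin n) → ℝ) :
    ∑ G ∈ (outForests W k).filter (fun G => ¬ IsRoot G j), wt W G * f G =
      ∑ H ∈ baseForests W k j, ∑ u with ¬ FReach H j u,
        wt W H * W u j * f (insert (u, j) H) := by
  have hpos : ∀ H ∈ baseForests W k j, ∑ u with ¬ FReach H j u,
        wt W H * W u j * f (insert (u, j) H) = ∑ u with 0 < W u j ∧ ¬ FReach H j u,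
        wt W H * W u j * f (insert (u, j) H) := by
    intro H _
    symm
    apply Finset.sum_subset
    · intro u; simp
    · intro u hu hu'
      have : W u j = 0 := by
        simp only [Finset.mem_filter, Finset.mem_univ, true_and] at hu hu'
        exact le_antisymm (not_lt.1 fun h => hu' ⟨h, hu⟩) (hW0 u j)
      simp [this]
  rw [Finset.sum_congr rfl hpos, Finset.sum_sigma']
  symm
  have key : ∀ {H : Finset (Fin n × Fin n)} {u : Fin n}, IsRoot H j → (u, j) ∉ H :=
    fun hr hm => hr _ hm rfl
  refine Finset.sum_bij (fun p _ => insert (p.2, j) p.1) ?_ ?_ ?_ ?_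
  · rintro ⟨H, u⟩ hp
    simp only [baseForests, Finset.mem_sigma, Finset.mem_filter, Finset.mem_univ, true_and] at hp
    obtain ⟨⟨h1, h2, h3⟩, h4⟩ := hp
    simp only [outForests, Finset.mem_filter, Finset.mem_univ, true_and]
    refine ⟨⟨(isOutForest_insert h2).2 ⟨h1, h4⟩, ?_⟩, fun h => (isRoot_insert.1 h).1 rfl⟩
    rw [Finset.card_insert_of_notMem (key h2), h3]
  · rintro ⟨H, u⟩ hp ⟨H', u'⟩ hp' he
    simp only [baseForests, Finset.mem_sigma, Finset.mem_filter, Finset.mem_univ, true_and]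
      at hp hp' he
    have hu : u = u' := by
      have : (u, j) ∈ insert (u', j) H' := he ▸ Finset.mem_insert_self _ _
      rcases Finset.mem_insert.1 this with h | h
      · exact (Prod.mk.inj h).1
      · exact absurd h (key hp'.1.2.1)
    subst hu
    have hH : H = H' := by
      rw [← Finset.erase_insert (key (u := u) hp.1.2.1), he,
        Finset.erase_insert (key hp'.1.2.1)]
    rw [hH]
  · intro G hG
    simp only [outForests, Finset.mem_filter, Finset.mem_univ, true_and] at hG
    obtain ⟨⟨hG, hk⟩, hr⟩ := hG
    have hr' : ∃ u, (u, j) ∈ G := by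
      by_contra! h
      exact hr fun e he hej => h e.1 (by rw [← hej]; exact he)
    obtain ⟨u, hu⟩ := hr'
    have hroot : IsRoot (G.erase (u, j)) j := by
      rintro ⟨a, b⟩ he (rfl : b = j)
      obtain ⟨hne, he⟩ := Finset.mem_erase.1 he
      exact hne (by rw [hG.arc_unique he hu])
    have hins : insert (u, j) (G.erase (u, j)) = G := Finset.insert_erase hu
    have hfor := (isOutForest_insert (W := W) (u := u) hroot).1 (by rwa [hins])
    refine ⟨⟨G.erase (u, j), u⟩, ?_, hins⟩
    simp only [baseForests, Finset.mem_sigma, Finset.mem_filter, Finset.mem_univ, true_and]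
    exact ⟨⟨hfor.1, hroot, by rw [Finset.card_erase_add_one hu, hk]⟩, hfor.2⟩
  · rintro ⟨H, u⟩ hp
    simp only [baseForests, Finset.mem_sigma, Finset.mem_filter, Finset.mem_univ, true_and] at hp
    simp only [wt]
    rw [Finset.prod_insert (key hp.1.2.1)]
    ring

open scoped Classical in
/-- The indicator of `v` belonging to the tree of `F` diverging from `i`. -/
noncomputable def treeInd (F : Finset (Fin n × Fin n)) (i v : Fin n) : ℝ :=
  if inTreeOf F i v then 1 else 0

theorem Qmat_apply (W : Matrix (Fin n) (Fin n) ℝ) (k : ℕ) (i j : Fin n) :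
    Qmat W k i j = ∑ F ∈ outForests W k, wt W F * treeInd F i j := by
  simp [Qmat, wtSet, treeInd, Finset.sum_filter]

theorem Lap_apply {W : Matrix (Fin n) (Fin n) ℝ} (hWd : ∀ i, W i i = 0) (i j : Fin n) :
    Lap W i j = (if i = j then ∑ k, W k j else 0) - W i j := by
  unfold Lap
  split_ifs with h
  · subst h
    rw [← Finset.add_sum_erase _ _ (Finset.mem_univ i), hWd]
    ring
  · ring

open scoped Classical in
/-- When `j` is not a root, the weighted differences between the tree indicators of `j` and of
the possible tails `u` cancel. -/
theorem sum_nonroot_eq_zero {W : Matrix (Fin n) (Fin n) ℝ} (hW0 : ∀ i j, 0 ≤ W i j)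
    (k : ℕ) (i j : Fin n) :
    ∑ G ∈ (outForests W k).filter (fun G => ¬ IsRoot G j),
      wt W G * ∑ u, W u j * (treeInd G i j - treeInd G i u) = 0 := by
  rw [sum_nonroot hW0 k j fun G => ∑ u, W u j * (treeInd G i j - treeInd G i u)]
  refine Finset.sum_eq_zero fun H hH => ?_
  simp only [baseForests, Finset.mem_filter, Finset.mem_univ, true_and] at hH
  obtain ⟨hF, hr, -⟩ := hH
  have inner : ∀ p ∈ Finset.univ.filter (fun u => ¬ FReach H j u),
      wt W H * W p j * ∑ u, W u j *
        (treeInd (insert (p, j) H) i j - treeInd (insert (p, j) H) i u) =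
      ∑ u with ¬ FReach H j u,
        wt W H * (W p j * W u j * (treeInd H i p - treeInd H i u)) := by
    intro p hp
    have hp : ¬ FReach H j p := by simpa using hp
    rw [Finset.sum_filter, Finset.mul_sum]
    refine Finset.sum_congr rfl fun u _ => ?_
    have hj := inTreeOf_insert_of_reach (i := i) hF hr hp (v := j) .refl
    by_cases hu : FReach H j u
    · have := inTreeOf_insert_of_reach (i := i) hF hr hp hu
      simp [treeInd, hj, this, hu]
    · have := inTreeOf_insert_of_not_reach (u := p) (i := i) hu
      simp only [treeInd, hj, this, hu, not_false_eq_true, if_true]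
      ring
  rw [Finset.sum_congr rfl inner]
  -- The double sum is antisymmetric in its two indices.
  have anti : ∀ s : Finset (Fin n),
      ∑ p ∈ s, ∑ u ∈ s, wt W H * (W p j * W u j * (treeInd H i p - treeInd H i u)) =
      -∑ p ∈ s, ∑ u ∈ s, wt W H * (W p j * W u j * (treeInd H i p - treeInd H i u)) := by
    intro s
    conv_lhs => rw [Finset.sum_comm]
    rw [← Finset.sum_neg_distrib]
    refine Finset.sum_congr rfl fun p _ => ?_
    rw [← Finset.sum_neg_distrib]
    exact Finset.sum_congr rfl fun u _ => by ring
  linarith [anti (Finset.univ.filter (fun u => ¬ FReach H j u))]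

/-- The recurrence `Q_k L = σ_{k+1} I - Q_{k+1}`. -/
theorem Qmat_mul_Lap {W : Matrix (Fin n) (Fin n) ℝ} (hW0 : ∀ i j, 0 ≤ W i j)
    (hWd : ∀ i, W i i = 0) (k : ℕ) :
    Qmat W k * Lap W = sigma W (k + 1) • (1 : Matrix (Fin n) (Fin n) ℝ) - Qmat W (k + 1) := by
  classical
  ext i j
  have hL : (Qmat W k * Lap W) i j =
      ∑ F ∈ outForests W k, wt W F * ∑ u, W u j * (treeInd F i j - treeInd F i u) := by
    simp only [Matrix.mul_apply, Lap_apply hWd, mul_sub, Finset.sum_sub_distrib, mul_ite, mul_zero,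
      Finset.sum_ite_eq', Finset.mem_univ, if_true]
    simp only [Qmat_apply, Finset.sum_mul, Finset.mul_sum]
    congr 1
    · rw [Finset.sum_comm]
      refine Finset.sum_congr rfl fun F _ => Finset.sum_congr rfl fun u _ => by ring
    · rw [Finset.sum_comm]
      refine Finset.sum_congr rfl fun F _ => Finset.sum_congr rfl fun u _ => by ring
  have hR : (sigma W (k + 1) • (1 : Matrix (Fin n) (Fin n) ℝ) - Qmat W (k + 1)) i j =
      ∑ G ∈ outForests W (k + 1), wt W G * ((if i = j then 1 else 0) - treeInd G i j) := by
    simp only [Matrix.sub_apply, Matrix.smul_apply, Matrix.one_apply, Qmat_apply, sigma, wtSet,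
      smul_eq_mul, Finset.sum_mul, mul_sub, Finset.sum_sub_distrib]
  rw [hL, hR, ← Finset.sum_filter_add_sum_filter_not _ (fun F => IsRoot F j),
    sum_nonroot_eq_zero hW0, add_zero,
    ← Finset.sum_filter_add_sum_filter_not (outForests W (k + 1)) (fun F => IsRoot F j)]
  have hzero : ∑ G ∈ (outForests W (k + 1)).filter (fun G => IsRoot G j),
      wt W G * ((if i = j then 1 else 0) - treeInd G i j) = 0 := by
    refine Finset.sum_eq_zero fun G hG => ?_
    simp only [outForests, Finset.mem_filter, Finset.mem_univ, true_and] at hG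
    simp [treeInd, inTreeOf_of_reach_root hG.1.1 hG.2 .refl]
  have hnon := sum_nonroot hW0 (k + 1) j fun G => (if i = j then 1 else 0) - treeInd G i j
  rw [hzero, zero_add]
  refine Eq.trans ?_ hnon.symm
  have hset : (outForests W k).filter (fun F => IsRoot F j) = baseForests W (k + 1) j := by
    ext H
    simp only [outForests, baseForests, Finset.mem_filter, Finset.mem_univ, true_and,
      Nat.add_right_cancel_iff]
    tauto
  rw [hset]
  refine Finset.sum_congr rfl fun H hH => ?_
  simp only [baseForests, Finset.mem_filter, Finset.mem_univ, true_and] at hH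
  obtain ⟨hF, hr, -⟩ := hH
  rw [Finset.sum_filter, Finset.mul_sum]
  refine Finset.sum_congr rfl fun u _ => ?_
  have hj := inTreeOf_of_reach_root (i := i) hF hr (v := j) .refl
  by_cases hu : FReach H j u
  · have := inTreeOf_of_reach_root (i := i) hF hr hu
    simp [treeInd, hj, this, hu]
  · have := inTreeOf_insert_of_reach (i := i) hF hr hu (v := j) .refl
    simp only [treeInd, hj, this, hu, not_false_eq_true, if_true]
    ring

/-! ### Maximum out-forests and the eigenprojection -/

theorem isOutForest_empty (W : Matrix (Fin n) (Fin n) ℝ) : IsOutForest W ∅ := by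
  refine ⟨by simp, by simp, fun v hv => ?_⟩
  obtain ⟨_, _, h⟩ := Relation.TransGen.tail'_iff.1 hv
  simp at h

theorem outForests_zero (W : Matrix (Fin n) (Fin n) ℝ) : outForests W 0 = {∅} := by
  ext F
  simp only [outForests, Finset.mem_filter, Finset.mem_univ, true_and, Finset.mem_singleton,
    Finset.card_eq_zero]
  exact ⟨And.right, fun h => ⟨h ▸ isOutForest_empty W, h⟩⟩

theorem Qmat_zero (W : Matrix (Fin n) (Fin n) ℝ) : Qmat W 0 = 1 := by
  ext i j
  rw [Qmat_apply, outForests_zero]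
  simp [wt, treeInd, Matrix.one_apply,
    inTreeOf_of_reach_root (i := i) (isOutForest_empty W) (j := j) (by simp [IsRoot]) .refl]

theorem sigma_zero (W : Matrix (Fin n) (Fin n) ℝ) : sigma W 0 = 1 := by
  simp [sigma, outForests_zero, wtSet, wt]

/-- `Q_k` is a scalar matrix minus a left (equally, right) multiple of `L`; in particular it
commutes with `L`. -/
theorem exists_Qmat_eq {W : Matrix (Fin n) (Fin n) ℝ} (hW0 : ∀ i j, 0 ≤ W i j)
    (hWd : ∀ i, W i i = 0) (k : ℕ) :
    ∃ R, Commute R (Lap W) ∧ Qmat W k = sigma W k • 1 - R * Lap W := by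
  induction k with
  | zero => exact ⟨0, Commute.zero_left _, by simp [Qmat_zero, sigma_zero]⟩
  | succ k ih =>
    obtain ⟨R, hR, hQ⟩ := ih
    refine ⟨Qmat W k, ?_, by rw [Qmat_mul_Lap hW0 hWd]; abel⟩
    rw [hQ]
    exact ((Commute.one_left _).smul_left _).sub_left (hR.mul_left (Commute.refl _))

theorem outForests_eq_empty {W : Matrix (Fin n) (Fin n) ℝ} :
    outForests W (maxArcs W + 1) = ∅ := by
  classical
  refine Finset.filter_eq_empty_iff.2 fun F _ h => ?_
  have : F.card ≤ maxArcs W :=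
    Finset.le_sup (f := Finset.card) (by simpa [allOutForests] using h.1)
  omega

theorem sigma_maxArcs_pos (W : Matrix (Fin n) (Fin n) ℝ) : 0 < sigma W (maxArcs W) := by
  classical
  refine Finset.sum_pos (fun F hF => ?_) ?_
  · simp only [outForests, Finset.mem_filter, Finset.mem_univ, true_and] at hF
    exact Finset.prod_pos fun e he => hF.1.1 e he
  · obtain ⟨F, hF, hc⟩ := Finset.exists_mem_eq_sup (allOutForests W)
      ⟨∅, by simpa [allOutForests] using isOutForest_empty W⟩ Finset.card
    simp only [allOutForests, Finset.mem_filter, Finset.mem_univ, true_and] at hF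
    exact ⟨F, by simpa [outForests] using ⟨hF, hc.symm⟩⟩

/-- `J̃` is the eigenprojection of `L` corresponding to the eigenvalue 0:
`ℝⁿ` is the direct sum of the null space of `L` and the column space of `L`, and `J̃` is the
projection onto the null space of `L` along the column space of `L`; equivalently
`J̃² = J̃`, `L J̃ = J̃ L = 0`, `range(J̃) = ker(L)` and `ker(J̃) = range(L)`. -/
theorem Jtil_eigenprojection (n : ℕ) (hn : 1 < n)
    (W : Matrix (Fin n) (Fin n) ℝ)
    (hW0 : ∀ i j, 0 ≤ W i j) (hWd : ∀ i, W i i = 0) :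
    IsCompl (LinearMap.ker (Lap W).mulVecLin) (LinearMap.range (Lap W).mulVecLin) ∧
    Jtil W * Jtil W = Jtil W ∧
    Lap W * Jtil W = 0 ∧ Jtil W * Lap W = 0 ∧
    LinearMap.range (Jtil W).mulVecLin = LinearMap.ker (Lap W).mulVecLin ∧
    LinearMap.ker (Jtil W).mulVecLin = LinearMap.range (Lap W).mulVecLin := by
  have hpos := sigma_maxArcs_pos W
  have hJL : Jtil W * Lap W = 0 := by
    have h0 : Qmat W (maxArcs W + 1) = 0 := by
      ext i j
      simp [Qmat_apply, outForests_eq_empty]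
    have h1 : sigma W (maxArcs W + 1) = 0 := by simp [sigma, wtSet, outForests_eq_empty]
    rw [Jtil, Matrix.smul_mul, Qmat_mul_Lap hW0 hWd, h0, h1]
    simp
  obtain ⟨R, hR, hJ⟩ : ∃ R, Commute R (Lap W) ∧ Jtil W = 1 - R * Lap W := by
    obtain ⟨R, hR, hQ⟩ := exists_Qmat_eq hW0 hWd (maxArcs W)
    refine ⟨(sigma W (maxArcs W))⁻¹ • R, hR.smul_left _, ?_⟩
    rw [Jtil, hQ, smul_sub, smul_smul, inv_mul_cancel₀ hpos.ne', one_smul, Matrix.smul_mul]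
  have hJ' : Jtil W = 1 - Lap W * R := by rw [hJ, hR.eq]
  have hLJ : Lap W * Jtil W = 0 := by
    rw [← hJL, hJ]
    exact (((Commute.one_left _).sub_left (hR.mul_left (Commute.refl _))).eq).symm
  have hJJ : Jtil W * Jtil W = Jtil W := by
    conv_lhs => rw [hJ', mul_sub, mul_one, ← hJ', ← mul_assoc, hJL, zero_mul, sub_zero]
  have hrange : LinearMap.range (Jtil W).mulVecLin = LinearMap.ker (Lap W).mulVecLin := by
    ext x
    simp only [LinearMap.mem_range, LinearMap.mem_ker, Matrix.mulVecLin_apply]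
    constructor
    · rintro ⟨y, rfl⟩
      rw [Matrix.mulVec_mulVec, hLJ, Matrix.zero_mulVec]
    · intro hx
      refine ⟨x, ?_⟩
      rw [hJ, Matrix.sub_mulVec, ← Matrix.mulVec_mulVec, hx]
      simp
  have hker : LinearMap.ker (Jtil W).mulVecLin = LinearMap.range (Lap W).mulVecLin := by
    ext x
    simp only [LinearMap.mem_range, LinearMap.mem_ker, Matrix.mulVecLin_apply]
    constructor
    · intro hx
      refine ⟨R *ᵥ x, ?_⟩
      rw [hJ', Matrix.sub_mulVec, Matrix.one_mulVec, sub_eq_zero] at hx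
      rw [Matrix.mulVec_mulVec, ← hx]
    · rintro ⟨y, rfl⟩
      rw [Matrix.mulVec_mulVec, hJL, Matrix.zero_mulVec]
  refine ⟨?_, hJJ, hLJ, hJL, hrange, hker⟩
  rw [← hrange, ← hker]
  have hid : IsIdempotentElem (Jtil W).mulVecLin := by
    unfold IsIdempotentElem
    rw [Module.End.mul_eq_comp, ← Matrix.mulVecLin_mul, hJJ]
  exact LinearMap.IsIdempotentElem.isCompl hid

end ForestMatrix
end

section
/- Let K be a source knot of Γ and k ∈ K. Then for every vertex j of Γ, J̃_kj = w(𝒯^k)·w(𝒫^{K*→j}) / w(ℱ_{(d')}); furthermore, if j ∈ K⁺, then J̃_kj = J̃_kk = w(𝒯^k)/w(𝒯). -/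
/-!
An arc whose head lies in the source knot `K` also has its tail in `K`, so splitting the arcs of an
out-forest by whether the head lies in `K` identifies the out-forests of `Γ` with the pairs
`(T, P)` of an out-forest `T` of `Γ_K` and an out-forest `P` of `Γ_{-K}` (`isOutForest_union`,
`isOutForest_restr_filter`, `isOutForest_wminus_filter`). The number of arcs is additive and the
weight multiplicative under this splitting, so `T ∪ P` is maximum exactly when `T` and `P` are, and
every total weight over maximum out-forests of `Γ` cut out by a condition on `T` and a condition
on `P` factors (`wtSet_filter_eq_mul`). It remains to translate the conditions.

* Any vertex set reaching the whole digraph contains the root set of some out-forest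
  (`exists_outForest`). Hence no root of a maximum out-forest is reachable from another one
  (`root_unique`). As `Γ_K` is strongly connected, its maximum out-forests are its spanning
  diverging trees (`mem_maxForests_restr_iff`).
* The vertex `j` is in the tree of `T ∪ P` diverging from `k ∈ K` iff `T` diverges from `k` and
  `j` is reachable in `P` from `K` (`inTreeOf_union_iff`). This gives the product formula.
* By `root_unique`, the mutually reachable class of a root of a maximum out-forest is a source
  knot. So for `j ∈ K⁺` the root above `j` lies in `K`, whence every maximum out-forest of `Γ_{-K}`
  meets the condition at `j` (`freach_of_mem_kplus`), and `w(𝒫)` cancels.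
-/

open Matrix Finset

namespace ForestMatrix

variable {n : ℕ}

open scoped Classical in
/-- `𝒯^k`: the set of spanning diverging trees of the restriction `Γ_K` of `Γ` to `K`
that diverge from `k` (all arcs lie within `K`, and every vertex of `K` is reachable
from `k`). -/
noncomputable def knotTrees (W : Matrix (Fin n) (Fin n) ℝ) (K : Finset (Fin n))
    (k : Fin n) : Finset (Finset (Fin n × Fin n)) :=
  Finset.univ.filter (fun F => IsOutForest W F ∧ (∀ e ∈ F, e.1 ∈ K ∧ e.2 ∈ K) ∧
    ∀ j ∈ K, FReach F k j)

open scoped Classical in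
/-- `𝒯`: the set of all spanning diverging trees of the restriction `Γ_K`. -/
noncomputable def knotTreesAll (W : Matrix (Fin n) (Fin n) ℝ) (K : Finset (Fin n)) :
    Finset (Finset (Fin n × Fin n)) :=
  Finset.univ.filter (fun F => IsOutForest W F ∧ (∀ e ∈ F, e.1 ∈ K ∧ e.2 ∈ K) ∧
    ∃ k ∈ K, ∀ j ∈ K, FReach F k j)

/-- The weight matrix of `Γ_{−K}`: the spanning subgraph of `Γ` obtained by deleting all
arcs of `Γ_K` (arcs with both endpoints in `K`). -/
noncomputable def Wminus (W : Matrix (Fin n) (Fin n) ℝ) (K : Finset (Fin n)) :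
    Matrix (Fin n) (Fin n) ℝ :=
  fun i j => if i ∈ K ∧ j ∈ K then 0 else W i j
open scoped Classical in
/-- `𝒫^{K*→j}`: the set of maximum out-forests of `Γ_{−K}` in which `j` is reachable from
some vertex of `K`. -/
noncomputable def maxForestsTo (W : Matrix (Fin n) (Fin n) ℝ) (K : Finset (Fin n))
    (j : Fin n) : Finset (Finset (Fin n × Fin n)) :=
  (outForests (Wminus W K) (maxArcs (Wminus W K))).filter (fun F => ∃ u ∈ K, FReach F u j)

/-- `K⁺`: the set of vertices reachable from `K` and unreachable from every other source
knot. -/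
def Kplus (W : Matrix (Fin n) (Fin n) ℝ) (K : Finset (Fin n)) : Set (Fin n) :=
  {v | (∃ u ∈ K, Reach W u v) ∧
    ∀ K' : Finset (Fin n), IsSourceKnot W K' → K' ≠ K → ∀ u ∈ K', ¬ Reach W u v}

/-! ### Roots of out-forests -/

/-- The weight matrix of `Γ_K`, regarded as a spanning subgraph of `Γ` in which the vertices
outside `K` are isolated. -/
noncomputable def restr (W : Matrix (Fin n) (Fin n) ℝ) (K : Finset (Fin n)) :
    Matrix (Fin n) (Fin n) ℝ :=
  fun i j => if i ∈ K ∧ j ∈ K then W i j else 0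

theorem mem_outForests {W : Matrix (Fin n) (Fin n) ℝ} {m : ℕ} {F : Finset (Fin n × Fin n)} :
    F ∈ outForests W m ↔ IsOutForest W F ∧ F.card = m := by
  simp [outForests]

theorem card_le_maxArcs {W : Matrix (Fin n) (Fin n) ℝ} {F : Finset (Fin n × Fin n)}
    (h : IsOutForest W F) : F.card ≤ maxArcs W :=
  Finset.le_sup (f := Finset.card) (by simpa [allOutForests] using h)

theorem exists_max (W : Matrix (Fin n) (Fin n) ℝ) : ∃ F, F ∈ outForests W (maxArcs W) := by
  have hne : (allOutForests W).Nonempty := ⟨∅, by simp [allOutForests, isOutForest_empty]⟩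
  obtain ⟨F, hF, h⟩ := Finset.exists_mem_eq_sup _ hne Finset.card
  exact ⟨F, mem_outForests.2 ⟨by simpa [allOutForests] using hF, h.symm⟩⟩

theorem IsOutForest.eq_of_snd_eq {W : Matrix (Fin n) (Fin n) ℝ} {F : Finset (Fin n × Fin n)}
    (h : IsOutForest W F) {e f : Fin n × Fin n} (he : e ∈ F) (hf : f ∈ F) (hef : e.2 = f.2) :
    e = f :=
  Finset.card_le_one.1 (h.2.1 f.2) e (by simp [he, hef]) f (by simp [hf])

/-- The arcs of an out-forest correspond to its non-root vertices. -/
theorem IsOutForest.card_image {W : Matrix (Fin n) (Fin n) ℝ} {F : Finset (Fin n × Fin n)}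
    (h : IsOutForest W F) : (F.image Prod.snd).card = F.card :=
  Finset.card_image_of_injOn fun _ he _ hf hef => h.eq_of_snd_eq he hf hef

theorem IsOutForest.exists_root {W : Matrix (Fin n) (Fin n) ℝ} {F : Finset (Fin n × Fin n)}
    (h : IsOutForest W F) (v : Fin n) : ∃ r, (∀ e ∈ F, e.2 ≠ r) ∧ FReach F r v := by
  have : Std.Irrefl (Relation.TransGen fun a b => (a, b) ∈ F) := ⟨h.2.2⟩
  have wf := Finite.wellFounded_of_trans_of_irrefl (Relation.TransGen fun a b => (a, b) ∈ F)
  induction v using wf.induction with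
  | _ v ih =>
    by_cases hv : ∀ e ∈ F, e.2 ≠ v
    · exact ⟨v, hv, Relation.ReflTransGen.refl⟩
    · push Not at hv
      obtain ⟨⟨a, b⟩, he, rfl⟩ := hv
      obtain ⟨r, hr, hra⟩ := ih a (Relation.TransGen.single he)
      exact ⟨r, hr, hra.tail he⟩

theorem IsOutForest.reach {W : Matrix (Fin n) (Fin n) ℝ} {F : Finset (Fin n × Fin n)}
    (h : IsOutForest W F) {i j : Fin n} (hij : FReach F i j) : Reach W i j :=
  Relation.ReflTransGen.mono (fun a b hab => h.1 (a, b) hab) _ _ hij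

/-- `v` is the end of a walk with `m` arcs that starts in `R`. -/
def WalkFrom (W : Matrix (Fin n) (Fin n) ℝ) (R : Finset (Fin n)) : ℕ → Fin n → Prop
  | 0, v => v ∈ R
  | m + 1, v => ∃ p, WalkFrom W R m p ∧ 0 < W p v

/-- If `R` reaches every vertex, there is an out-forest all of whose roots lie in `R`: give each
vertex outside `R` a parent that is closer to `R`. -/
theorem exists_outForest (W : Matrix (Fin n) (Fin n) ℝ) (R : Finset (Fin n))
    (hR : ∀ v, ∃ r ∈ R, Reach W r v) :
    ∃ F, IsOutForest W F ∧ ∀ v, v ∉ R → v ∈ F.image Prod.snd := by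
  classical
  have hB : ∀ v, ∃ m, WalkFrom W R m v := by
    intro v
    obtain ⟨r, hr, hrv⟩ := hR v
    induction hrv with
    | refl => exact ⟨0, hr⟩
    | tail _ hbc ih =>
      obtain ⟨m, hm⟩ := ih
      exact ⟨m + 1, _, hm, hbc⟩
  let d : Fin n → ℕ := fun v => Nat.find (hB v)
  have hp : ∀ v, ∃ p, v ∉ R → 0 < W p v ∧ d p < d v := by
    intro v
    by_cases hv : v ∈ R
    · exact ⟨v, fun h => absurd hv h⟩
    have hs : WalkFrom W R (d v) v := Nat.find_spec (hB v)
    cases hd : d v with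
    | zero => rw [hd] at hs; exact absurd hs hv
    | succ m =>
      rw [hd] at hs
      obtain ⟨p, hp, hpv⟩ := hs
      exact ⟨p, fun _ => ⟨hpv, Nat.lt_succ_of_le (Nat.find_min' (hB p) hp)⟩⟩
  choose p hp using hp
  let F : Finset (Fin n × Fin n) := (Finset.univ.filter (· ∉ R)).image fun v => (p v, v)
  have hF : ∀ a b, (a, b) ∈ F ↔ b ∉ R ∧ p b = a := by
    intro a b
    simp only [F, Finset.mem_image, Finset.mem_filter, Finset.mem_univ, true_and, Prod.mk.injEq]
    constructor
    · rintro ⟨v, hv, rfl, rfl⟩; exact ⟨hv, rfl⟩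
    · rintro ⟨hb, rfl⟩; exact ⟨b, hb, rfl, rfl⟩
  refine ⟨F, ⟨?_, ?_, ?_⟩, ?_⟩
  · rintro ⟨a, b⟩ he
    obtain ⟨hb, rfl⟩ := (hF a b).1 he
    exact (hp b hb).1
  · intro v
    refine Finset.card_le_one.2 ?_
    rintro ⟨a, b⟩ he ⟨c, e⟩ hf
    simp only [Finset.mem_filter] at he hf
    obtain ⟨he, rfl⟩ := he
    obtain ⟨hf, rfl⟩ := hf
    rw [← ((hF _ _).1 he).2, ← ((hF _ _).1 hf).2]
  · intro v hv
    have hlt : ∀ a b, Relation.TransGen (fun a b => (a, b) ∈ F) a b → d a < d b := by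
      intro a b hab
      have step : ∀ {a b}, (a, b) ∈ F → d a < d b := by
        intro a b h
        obtain ⟨hb, rfl⟩ := (hF a b).1 h
        exact (hp b hb).2
      induction hab with
      | single h => exact step h
      | tail _ h ih => exact ih.trans (step h)
    exact lt_irrefl _ (hlt v v hv)
  · intro v hv
    exact Finset.mem_image.2 ⟨(p v, v), (hF _ _).2 ⟨hv, rfl⟩, rfl⟩

/-- In a maximum out-forest no root is reachable (in the whole digraph) from another root:
otherwise the remaining roots would still reach every vertex, and an out-forest with fewer roots
would exist. -/
theorem root_unique_s10 {W : Matrix (Fin n) (Fin n) ℝ} {F : Finset (Fin n × Fin n)}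
    (hF : F ∈ outForests W (maxArcs W)) {r r' : Fin n} (hr : ∀ e ∈ F, e.2 ≠ r)
    (hr' : ∀ e ∈ F, e.2 ≠ r') (h : Reach W r' r) : r = r' := by
  classical
  obtain ⟨hF, hc⟩ := mem_outForests.1 hF
  by_contra hne
  have hr_im : r ∉ F.image Prod.snd := by
    intro h
    obtain ⟨e, he, hee⟩ := Finset.mem_image.1 h
    exact hr e he hee
  let S := insert r (F.image Prod.snd)
  have hroot : ∀ s, (∀ e ∈ F, e.2 ≠ s) → s ≠ r → s ∈ Sᶜ := by
    intro s hs hsr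
    simp only [S, Finset.mem_compl, Finset.mem_insert, Finset.mem_image, not_or, not_exists,
      not_and]
    exact ⟨hsr, hs⟩
  obtain ⟨F', hF', hh⟩ := exists_outForest W Sᶜ (by
    intro v
    obtain ⟨s, hs, hsv⟩ := hF.exists_root v
    by_cases hsr : s = r
    · subst hsr
      exact ⟨r', hroot r' hr' (Ne.symm hne), h.trans (hF.reach hsv)⟩
    · exact ⟨s, hroot s hs hsr, hF.reach hsv⟩)
  have h1 : S ⊆ F'.image Prod.snd := fun v hv => hh v (by simpa using hv)
  have h2 := Finset.card_le_card h1
  rw [hF'.card_image, Finset.card_insert_of_notMem hr_im, hF.card_image, hc] at h2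
  have := card_le_maxArcs hF'
  omega

/-! ### Splitting an out-forest along a source knot -/

theorem isOutForest_restr_iff {W : Matrix (Fin n) (Fin n) ℝ} {K : Finset (Fin n)}
    {T : Finset (Fin n × Fin n)} :
    IsOutForest (restr W K) T ↔ IsOutForest W T ∧ ∀ e ∈ T, e.1 ∈ K ∧ e.2 ∈ K := by
  constructor
  · intro h
    have h1 : ∀ e ∈ T, 0 < W e.1 e.2 ∧ (e.1 ∈ K ∧ e.2 ∈ K) := by
      intro e he
      have := h.1 e he
      unfold restr at this
      split_ifs at this with hK
      · exact ⟨this, hK⟩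
      · exact absurd this (lt_irrefl _)
    exact ⟨⟨fun e he => (h1 e he).1, h.2⟩, fun e he => (h1 e he).2⟩
  · rintro ⟨h, hK⟩
    exact ⟨fun e he => by simpa [restr, hK e he] using h.1 e he, h.2⟩

theorem isOutForest_wminus_iff {W : Matrix (Fin n) (Fin n) ℝ} {K : Finset (Fin n)}
    (hK : ∀ j k, k ∈ K → 0 < W j k → j ∈ K) {P : Finset (Fin n × Fin n)} :
    IsOutForest (Wminus W K) P ↔ IsOutForest W P ∧ ∀ e ∈ P, e.2 ∉ K := by
  constructor
  · intro h
    have h1 : ∀ e ∈ P, 0 < W e.1 e.2 ∧ e.2 ∉ K := by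
      intro e he
      have := h.1 e he
      unfold Wminus at this
      split_ifs at this with h'
      · exact absurd this (lt_irrefl _)
      · exact ⟨this, fun h2 => h' ⟨hK _ _ h2 this, h2⟩⟩
    exact ⟨⟨fun e he => (h1 e he).1, h.2⟩, fun e he => (h1 e he).2⟩
  · rintro ⟨h, hK'⟩
    exact ⟨fun e he => by simpa [Wminus, hK' e he] using h.1 e he, h.2⟩

theorem IsOutForest.subset {W : Matrix (Fin n) (Fin n) ℝ} {F G : Finset (Fin n × Fin n)}
    (h : IsOutForest W F) (hG : G ⊆ F) : IsOutForest W G :=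
  ⟨fun e he => h.1 e (hG he),
    fun v => (Finset.card_le_card (Finset.filter_subset_filter _ hG)).trans (h.2.1 v),
    fun v hv => h.2.2 v (Relation.TransGen.mono (fun _ _ hab => hG hab) _ _ hv)⟩

theorem isOutForest_restr_filter {W : Matrix (Fin n) (Fin n) ℝ} {K : Finset (Fin n)}
    (hK : ∀ j k, k ∈ K → 0 < W j k → j ∈ K) {F : Finset (Fin n × Fin n)} (h : IsOutForest W F) :
    IsOutForest (restr W K) (F.filter fun e => e.2 ∈ K) := by
  refine isOutForest_restr_iff.2 ⟨h.subset (Finset.filter_subset _ _), fun e he => ?_⟩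
  obtain ⟨he, heK⟩ := Finset.mem_filter.1 he
  exact ⟨hK _ _ heK (h.1 e he), heK⟩

theorem isOutForest_wminus_filter {W : Matrix (Fin n) (Fin n) ℝ} {K : Finset (Fin n)}
    (hK : ∀ j k, k ∈ K → 0 < W j k → j ∈ K) {F : Finset (Fin n × Fin n)} (h : IsOutForest W F) :
    IsOutForest (Wminus W K) (F.filter fun e => ¬ e.2 ∈ K) :=
  (isOutForest_wminus_iff hK).2 ⟨h.subset (Finset.filter_subset _ _),
    fun _ he => (Finset.mem_filter.1 he).2⟩

theorem filter_union_left {K : Finset (Fin n)} {T P : Finset (Fin n × Fin n)}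
    (hT : ∀ e ∈ T, e.1 ∈ K ∧ e.2 ∈ K) (hP : ∀ e ∈ P, e.2 ∉ K) :
    (T ∪ P).filter (fun e => e.2 ∈ K) = T := by
  ext e
  simp only [Finset.mem_filter, Finset.mem_union]
  exact ⟨fun h => h.1.resolve_right fun he => hP e he h.2, fun h => ⟨Or.inl h, (hT e h).2⟩⟩

theorem filter_union_right {K : Finset (Fin n)} {T P : Finset (Fin n × Fin n)}
    (hT : ∀ e ∈ T, e.1 ∈ K ∧ e.2 ∈ K) (hP : ∀ e ∈ P, e.2 ∉ K) :
    (T ∪ P).filter (fun e => ¬ e.2 ∈ K) = P := by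
  ext e
  simp only [Finset.mem_filter, Finset.mem_union]
  exact ⟨fun h => h.1.resolve_left fun he => h.2 (hT e he).2, fun h => ⟨Or.inr h, hP e h⟩⟩

theorem disjoint_parts {K : Finset (Fin n)} {T P : Finset (Fin n × Fin n)}
    (hT : ∀ e ∈ T, e.1 ∈ K ∧ e.2 ∈ K) (hP : ∀ e ∈ P, e.2 ∉ K) : Disjoint T P :=
  Finset.disjoint_left.2 fun e he hp => hP e hp (hT e he).2

/-- A cycle in `T ∪ P` would lie within `T` if it meets `K`, since every arc into `K` is an arc
of `T` leaving `K`, and within `P` otherwise. -/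
theorem isOutForest_union {W : Matrix (Fin n) (Fin n) ℝ} {K : Finset (Fin n)}
    {T P : Finset (Fin n × Fin n)} (hT : IsOutForest W T) (hTK : ∀ e ∈ T, e.1 ∈ K ∧ e.2 ∈ K)
    (hP : IsOutForest W P) (hPK : ∀ e ∈ P, e.2 ∉ K) : IsOutForest W (T ∪ P) := by
  refine ⟨?_, ?_, ?_⟩
  · intro e he
    exact (Finset.mem_union.1 he).elim (hT.1 e) (hP.1 e)
  · intro v
    refine Finset.card_le_one.2 fun e he f hf => ?_
    simp only [Finset.mem_filter, Finset.mem_union] at he hf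
    obtain ⟨he, rfl⟩ := he
    obtain ⟨hf, hfe⟩ := hf
    rcases he with he | he <;> rcases hf with hf | hf
    · exact hT.eq_of_snd_eq he hf hfe.symm
    · exact absurd (hTK e he).2 (hfe ▸ hPK f hf)
    · exact absurd (hTK f hf).2 (hfe ▸ hPK e he)
    · exact hP.eq_of_snd_eq he hf hfe.symm
  · intro v hv
    by_cases hvK : v ∈ K
    · have key : ∀ a b, Relation.TransGen (fun a b => (a, b) ∈ T ∪ P) a b → b ∈ K →
          Relation.TransGen (fun a b => (a, b) ∈ T) a b ∧ a ∈ K := by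
        intro a b hab hb
        have step : ∀ {a b}, (a, b) ∈ T ∪ P → b ∈ K → (a, b) ∈ T ∧ a ∈ K := by
          intro a b h hb
          have : (a, b) ∈ T := (Finset.mem_union.1 h).resolve_right fun h => hPK _ h hb
          exact ⟨this, (hTK _ this).1⟩
        induction hab using Relation.TransGen.head_induction_on with
        | single h => exact ⟨.single (step h hb).1, (step h hb).2⟩
        | head h _ ih =>
          have := step h ih.2
          exact ⟨.head this.1 ih.1, this.2⟩
      exact hT.2.2 v (key v v hv hvK).1
    · have key : ∀ a b, Relation.TransGen (fun a b => (a, b) ∈ T ∪ P) a b → a ∉ K →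
          Relation.TransGen (fun a b => (a, b) ∈ P) a b ∧ b ∉ K := by
        intro a b hab ha
        have step : ∀ {a b}, (a, b) ∈ T ∪ P → a ∉ K → (a, b) ∈ P ∧ b ∉ K := by
          intro a b h ha
          have : (a, b) ∈ P := (Finset.mem_union.1 h).resolve_left fun h => ha (hTK _ h).1
          exact ⟨this, hPK _ this⟩
        induction hab with
        | single h => exact ⟨.single (step h ha).1, (step h ha).2⟩
        | tail _ h ih =>
          have := step h ih.2
          exact ⟨.tail ih.1 this.1, this.2⟩
      exact hP.2.2 v (key v v hv hvK).1

theorem card_split (K : Finset (Fin n)) (F : Finset (Fin n × Fin n)) :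
    (F.filter fun e => e.2 ∈ K).card + (F.filter fun e => ¬ e.2 ∈ K).card = F.card :=
  Finset.card_filter_add_card_filter_not _

theorem maxArcs_split {W : Matrix (Fin n) (Fin n) ℝ} {K : Finset (Fin n)}
    (hK : ∀ j k, k ∈ K → 0 < W j k → j ∈ K) :
    maxArcs W = maxArcs (restr W K) + maxArcs (Wminus W K) := by
  apply le_antisymm
  · obtain ⟨F, hF⟩ := exists_max W
    obtain ⟨hF, hc⟩ := mem_outForests.1 hF
    rw [← hc, ← card_split K F]
    exact add_le_add (card_le_maxArcs (isOutForest_restr_filter hK hF))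
      (card_le_maxArcs (isOutForest_wminus_filter hK hF))
  · obtain ⟨T, hT⟩ := exists_max (restr W K)
    obtain ⟨P, hP⟩ := exists_max (Wminus W K)
    obtain ⟨hT, hTc⟩ := mem_outForests.1 hT
    obtain ⟨hP, hPc⟩ := mem_outForests.1 hP
    rw [isOutForest_restr_iff] at hT
    rw [isOutForest_wminus_iff hK] at hP
    rw [← hTc, ← hPc, ← Finset.card_union_of_disjoint (disjoint_parts hT.2 hP.2)]
    exact card_le_maxArcs (isOutForest_union hT.1 hT.2 hP.1 hP.2)

theorem union_mem_max {W : Matrix (Fin n) (Fin n) ℝ} {K : Finset (Fin n)}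
    (hK : ∀ j k, k ∈ K → 0 < W j k → j ∈ K) {T P : Finset (Fin n × Fin n)}
    (hT : T ∈ outForests (restr W K) (maxArcs (restr W K)))
    (hP : P ∈ outForests (Wminus W K) (maxArcs (Wminus W K))) :
    T ∪ P ∈ outForests W (maxArcs W) := by
  obtain ⟨hT, hTc⟩ := mem_outForests.1 hT
  obtain ⟨hP, hPc⟩ := mem_outForests.1 hP
  rw [isOutForest_restr_iff] at hT
  rw [isOutForest_wminus_iff hK] at hP
  refine mem_outForests.2 ⟨isOutForest_union hT.1 hT.2 hP.1 hP.2, ?_⟩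
  rw [Finset.card_union_of_disjoint (disjoint_parts hT.2 hP.2), hTc, hPc, maxArcs_split hK]

theorem split_mem_max {W : Matrix (Fin n) (Fin n) ℝ} {K : Finset (Fin n)}
    (hK : ∀ j k, k ∈ K → 0 < W j k → j ∈ K) {F : Finset (Fin n × Fin n)}
    (hF : F ∈ outForests W (maxArcs W)) :
    F.filter (fun e => e.2 ∈ K) ∈ outForests (restr W K) (maxArcs (restr W K)) ∧
    F.filter (fun e => ¬ e.2 ∈ K) ∈ outForests (Wminus W K) (maxArcs (Wminus W K)) := by
  obtain ⟨hF, hc⟩ := mem_outForests.1 hF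
  have h1 := isOutForest_restr_filter hK hF
  have h2 := isOutForest_wminus_filter hK hF
  have h3 := card_le_maxArcs h1
  have h4 := card_le_maxArcs h2
  have h5 := card_split K F
  have h6 := maxArcs_split hK
  exact ⟨mem_outForests.2 ⟨h1, by omega⟩, mem_outForests.2 ⟨h2, by omega⟩⟩

open scoped Classical in
/-- If a condition `C` on `T ∪ P` is the conjunction of a condition `A` on `T` and a condition `B`
on `P`, then the total weight of the maximum out-forests of `Γ` satisfying `C` factors. -/
theorem wtSet_filter_eq_mul {W : Matrix (Fin n) (Fin n) ℝ} {K : Finset (Fin n)}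
    (hK : ∀ j k, k ∈ K → 0 < W j k → j ∈ K) (A B C : Finset (Fin n × Fin n) → Prop)
    (hABC : ∀ T ∈ outForests (restr W K) (maxArcs (restr W K)),
      ∀ P ∈ outForests (Wminus W K) (maxArcs (Wminus W K)), (C (T ∪ P) ↔ A T ∧ B P)) :
    wtSet W ((outForests W (maxArcs W)).filter C) =
      wtSet W ((outForests (restr W K) (maxArcs (restr W K))).filter A) *
      wtSet (Wminus W K) ((outForests (Wminus W K) (maxArcs (Wminus W K))).filter B) := by
  unfold wtSet
  rw [Finset.sum_mul_sum, ← Finset.sum_product']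
  symm
  refine Finset.sum_bij' (fun x _ => x.1 ∪ x.2)
    (fun F _ => (F.filter (fun e => e.2 ∈ K), F.filter (fun e => ¬ e.2 ∈ K))) ?_ ?_ ?_ ?_ ?_
  · rintro ⟨T, P⟩ h
    simp only [Finset.mem_product, Finset.mem_filter] at h
    obtain ⟨⟨hT, hA⟩, hP, hB⟩ := h
    exact Finset.mem_filter.2 ⟨union_mem_max hK hT hP, (hABC T hT P hP).2 ⟨hA, hB⟩⟩
  · intro F hF
    obtain ⟨hF, hC⟩ := Finset.mem_filter.1 hF
    obtain ⟨h1, h2⟩ := split_mem_max hK hF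
    have h3 := (hABC _ h1 _ h2).1 (by rwa [Finset.filter_union_filter_not_eq])
    exact Finset.mem_product.2 ⟨Finset.mem_filter.2 ⟨h1, h3.1⟩, Finset.mem_filter.2 ⟨h2, h3.2⟩⟩
  · rintro ⟨T, P⟩ h
    simp only [Finset.mem_product, Finset.mem_filter] at h
    obtain ⟨⟨hT, -⟩, hP, -⟩ := h
    have hT := (isOutForest_restr_iff.1 (mem_outForests.1 hT).1).2
    have hP := ((isOutForest_wminus_iff hK).1 (mem_outForests.1 hP).1).2
    exact Prod.ext (filter_union_left hT hP) (filter_union_right hT hP)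
  · intro F _
    exact Finset.filter_union_filter_not_eq _ _
  · rintro ⟨T, P⟩ h
    simp only [Finset.mem_product, Finset.mem_filter] at h
    obtain ⟨⟨hT, -⟩, hP, -⟩ := h
    have hT := (isOutForest_restr_iff.1 (mem_outForests.1 hT).1).2
    have hP := ((isOutForest_wminus_iff hK).1 (mem_outForests.1 hP).1).2
    unfold wt
    rw [Finset.prod_union (disjoint_parts hT hP)]
    congr 1
    exact Finset.prod_congr rfl fun e he => by simp [Wminus, hP e he]

/-! ### Maximum out-forests of the knot -/

theorem reach_restr {W : Matrix (Fin n) (Fin n) ℝ} {K : Finset (Fin n)}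
    (hK : IsSourceKnot W K) {i j : Fin n} (hi : i ∈ K) (hj : j ∈ K) : Reach (restr W K) i j := by
  obtain ⟨⟨c, hc⟩, hcl⟩ := hK
  have hij : Reach W i j := ((hc i).1 hi).2.trans ((hc j).1 hj).1
  have key : Reach (restr W K) i j ∧ i ∈ K := by
    clear hi
    induction hij using Relation.ReflTransGen.head_induction_on with
    | refl => exact ⟨.refl, hj⟩
    | head h _ ih =>
      have ha := hcl _ _ ih.2 h
      exact ⟨.head (by simpa [restr, ha, ih.2] using h) ih.1, ha⟩
  exact key.1

theorem mem_of_freach {K : Finset (Fin n)} {T : Finset (Fin n × Fin n)}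
    (hT : ∀ e ∈ T, e.1 ∈ K ∧ e.2 ∈ K) {i j : Fin n} (h : FReach T i j) (hj : j ∈ K) : i ∈ K := by
  induction h using Relation.ReflTransGen.head_induction_on with
  | refl => exact hj
  | head h _ _ => exact (hT _ h).1

/-- The maximum out-forests of `Γ_K` are exactly its spanning diverging trees. -/
theorem mem_maxForests_restr_iff {W : Matrix (Fin n) (Fin n) ℝ} {K : Finset (Fin n)}
    (hK : IsSourceKnot W K) {k : Fin n} (hk : k ∈ K) {T : Finset (Fin n × Fin n)} :
    T ∈ outForests (restr W K) (maxArcs (restr W K)) ↔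
      IsOutForest W T ∧ (∀ e ∈ T, e.1 ∈ K ∧ e.2 ∈ K) ∧ ∃ r ∈ K, ∀ j ∈ K, FReach T r j := by
  constructor
  · intro hT
    have hF := (mem_outForests.1 hT).1
    obtain ⟨hW, hTK⟩ := isOutForest_restr_iff.1 hF
    obtain ⟨r, hr, hrk⟩ := hF.exists_root k
    have hrK := mem_of_freach hTK hrk hk
    refine ⟨hW, hTK, r, hrK, fun j hj => ?_⟩
    obtain ⟨s, hs, hsj⟩ := hF.exists_root j
    have hsK := mem_of_freach hTK hsj hj
    rwa [root_unique_s10 hT hr hs (reach_restr hK hsK hrK)]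
  · rintro ⟨hW, hTK, r, hrK, hrj⟩
    have hF := isOutForest_restr_iff.2 ⟨hW, hTK⟩
    refine mem_outForests.2 ⟨hF, le_antisymm (card_le_maxArcs hF) ?_⟩
    obtain ⟨S, hS⟩ := exists_max (restr W K)
    obtain ⟨hS, hSc⟩ := mem_outForests.1 hS
    have hSK := (isOutForest_restr_iff.1 hS).2
    -- `S` also has a root `s` in `K`, so it has at most `|K| - 1` arcs, one per non-root.
    obtain ⟨s, hs, hsk⟩ := hS.exists_root k
    have hsK := mem_of_freach hSK hsk hk
    have h1 : S.image Prod.snd ⊆ K.erase s := by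
      intro v hv
      obtain ⟨e, he, rfl⟩ := Finset.mem_image.1 hv
      exact Finset.mem_erase.2 ⟨hs e he, (hSK e he).2⟩
    have h2 : K.erase r ⊆ T.image Prod.snd := by
      intro v hv
      obtain ⟨hvr, hvK⟩ := Finset.mem_erase.1 hv
      rcases Relation.ReflTransGen.cases_tail (hrj v hvK) with h | ⟨c, _, hc⟩
      · exact absurd h hvr
      · exact Finset.mem_image.2 ⟨(c, v), hc, rfl⟩
    have h3 := Finset.card_le_card h1
    have h4 := Finset.card_le_card h2
    rw [hS.card_image, Finset.card_erase_of_mem hsK] at h3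
    rw [hF.card_image, Finset.card_erase_of_mem hrK] at h4
    omega

theorem knotTreesAll_eq {W : Matrix (Fin n) (Fin n) ℝ} {K : Finset (Fin n)}
    (hK : IsSourceKnot W K) {k : Fin n} (hk : k ∈ K) :
    knotTreesAll W K = outForests (restr W K) (maxArcs (restr W K)) := by
  ext T
  simp [mem_maxForests_restr_iff hK hk, knotTreesAll]

open scoped Classical in
theorem knotTrees_eq {W : Matrix (Fin n) (Fin n) ℝ} {K : Finset (Fin n)}
    (hK : IsSourceKnot W K) {k : Fin n} (hk : k ∈ K) :
    knotTrees W K k = (outForests (restr W K) (maxArcs (restr W K))).filter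
      (fun T => ∀ j ∈ K, FReach T k j) := by
  ext T
  simp only [knotTrees, Finset.mem_filter, Finset.mem_univ, true_and,
    mem_maxForests_restr_iff hK hk]
  exact ⟨fun h => ⟨⟨h.1, h.2.1, k, hk, h.2.2⟩, h.2.2⟩, fun h => ⟨h.1.1, h.1.2.1, h.2⟩⟩

/-! ### Reachability in a split forest -/

theorem FReach.mono {F G : Finset (Fin n × Fin n)} (h : F ⊆ G) {i j : Fin n}
    (hij : FReach F i j) : FReach G i j :=
  Relation.ReflTransGen.mono (fun _ _ hab => h hab) _ _ hij

/-- After its last visit to `K`, a path of `T ∪ P` uses arcs of `P` only. -/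
theorem exists_freach_right {K : Finset (Fin n)} {T P : Finset (Fin n × Fin n)}
    (hT : ∀ e ∈ T, e.1 ∈ K ∧ e.2 ∈ K) {k j : Fin n} (hk : k ∈ K) (h : FReach (T ∪ P) k j) :
    ∃ u ∈ K, FReach P u j := by
  induction h with
  | refl => exact ⟨k, hk, .refl⟩
  | tail _ hbc ih =>
    rcases Finset.mem_union.1 hbc with h | h
    · exact ⟨_, (hT _ h).2, .refl⟩
    · obtain ⟨u, hu, hub⟩ := ih
      exact ⟨u, hu, hub.tail h⟩

theorem inTreeOf_union_iff {W : Matrix (Fin n) (Fin n) ℝ} {K : Finset (Fin n)}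
    (hK : IsSourceKnot W K) {k : Fin n} (hk : k ∈ K) {T P : Finset (Fin n × Fin n)}
    (hT : T ∈ outForests (restr W K) (maxArcs (restr W K)))
    (hP : P ∈ outForests (Wminus W K) (maxArcs (Wminus W K))) (j : Fin n) :
    inTreeOf (T ∪ P) k j ↔ (∀ i ∈ K, FReach T k i) ∧ ∃ u ∈ K, FReach P u j := by
  obtain ⟨hTF, hTK, r, hrK, hr⟩ := (mem_maxForests_restr_iff hK hk).1 hT
  have hPK := ((isOutForest_wminus_iff hK.2).1 (mem_outForests.1 hP).1).2
  constructor
  · rintro ⟨hroot, hkj⟩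
    refine ⟨?_, exists_freach_right hTK hk hkj⟩
    have hrk : k = r := by
      rcases Relation.ReflTransGen.cases_tail (hr k hk) with h | ⟨c, _, hc⟩
      · exact h
      · exact absurd rfl (hroot _ (Finset.mem_union_left _ hc))
    exact hrk ▸ hr
  · rintro ⟨hki, u, hu, huj⟩
    refine ⟨?_, ((hki u hu).mono Finset.subset_union_left).trans
      (huj.mono Finset.subset_union_right)⟩
    rintro ⟨a, b⟩ he rfl
    rcases Finset.mem_union.1 he with h | h
    · exact hTF.2.2 b (Relation.TransGen.tail' (hki a (hTK _ h).1) h)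
    · exact hPK _ h hk

/-- A root `r` of a maximum out-forest of `Γ` is reachable only from vertices that it reaches, so
its bicomponent is a source knot. If `j ∈ K⁺`, that source knot must be `K` when `r` is the root
above `j`. -/
theorem freach_of_mem_kplus {W : Matrix (Fin n) (Fin n) ℝ} {K : Finset (Fin n)}
    (hK : IsSourceKnot W K) {j : Fin n} (hj : j ∈ Kplus W K) {P : Finset (Fin n × Fin n)}
    (hP : P ∈ outForests (Wminus W K) (maxArcs (Wminus W K))) : ∃ u ∈ K, FReach P u j := by
  classical
  obtain ⟨T, hT⟩ := exists_max (restr W K)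
  have hTK := (isOutForest_restr_iff.1 (mem_outForests.1 hT).1).2
  have hF := union_mem_max hK.2 hT hP
  have hFF := (mem_outForests.1 hF).1
  obtain ⟨r, hr, hrj⟩ := hFF.exists_root j
  have hback : ∀ v, Reach W v r → Reach W r v := by
    intro v hv
    obtain ⟨s, hs, hsv⟩ := hFF.exists_root v
    rw [root_unique_s10 hF hr hs ((hFF.reach hsv).trans hv)]
    exact hFF.reach hsv
  let K' : Finset (Fin n) := Finset.univ.filter fun v => Reach W r v ∧ Reach W v r
  have hmem : ∀ v, v ∈ K' ↔ Reach W r v ∧ Reach W v r := by simp [K']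
  have hK' : IsSourceKnot W K' := by
    refine ⟨⟨r, hmem⟩, fun a b hb hab => ?_⟩
    have har : Reach W a r := Relation.ReflTransGen.head hab ((hmem b).1 hb).2
    exact (hmem a).2 ⟨hback a har, har⟩
  have hrK' : r ∈ K' := (hmem r).2 ⟨.refl, .refl⟩
  have hKK : K' = K := by
    by_contra hne
    exact hj.2 K' hK' hne r hrK' (hFF.reach hrj)
  exact exists_freach_right hTK (hKK ▸ hrK') hrj

theorem wtSet_max_pos (W : Matrix (Fin n) (Fin n) ℝ) :
    0 < wtSet W (outForests W (maxArcs W)) := by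
  obtain ⟨F, hF⟩ := exists_max W
  exact Finset.sum_pos (fun G hG => Finset.prod_pos (mem_outForests.1 hG).1.1) ⟨F, hF⟩

/-- Let `K` be a source knot of `Γ` and `k ∈ K`. Then for every vertex
`j`, `J̃_kj = w(𝒯^k)·w(𝒫^{K*→j}) / w(ℱ_{(d')})`; furthermore, if `j ∈ K⁺`, then
`J̃_kj = J̃_kk = w(𝒯^k)/w(𝒯)`. -/
theorem Jtil_entry_formula (n : ℕ) (hn : 1 < n)
    (W : Matrix (Fin n) (Fin n) ℝ)
    (hW0 : ∀ i j, 0 ≤ W i j) (hWd : ∀ i, W i i = 0)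
    (K : Finset (Fin n)) (hK : IsSourceKnot W K) (k : Fin n) (hk : k ∈ K) :
    (∀ j : Fin n,
      Jtil W k j =
        wtSet W (knotTrees W K k) * wtSet (Wminus W K) (maxForestsTo W K j) /
          wtSet W (outForests W (maxArcs W))) ∧
    (∀ j : Fin n, j ∈ Kplus W K →
      Jtil W k j = Jtil W k k ∧
      Jtil W k k = wtSet W (knotTrees W K k) / wtSet W (knotTreesAll W K)) := by
  classical
  have hformula : ∀ j : Fin n, Jtil W k j =
      wtSet W (knotTrees W K k) * wtSet (Wminus W K) (maxForestsTo W K j) /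
        wtSet W (outForests W (maxArcs W)) := by
    intro j
    have hQ : Qmat W (maxArcs W) k j =
        wtSet W (knotTrees W K k) * wtSet (Wminus W K) (maxForestsTo W K j) := by
      have h := wtSet_filter_eq_mul hK.2 (fun T => ∀ i ∈ K, FReach T k i)
        (fun P => ∃ u ∈ K, FReach P u j) (fun F => inTreeOf F k j)
        (fun T hT P hP => inTreeOf_union_iff hK hk hT hP j)
      rw [knotTrees_eq hK hk]
      unfold Qmat maxForestsTo
      convert h
    rw [div_eq_inv_mul, ← hQ]
    rfl
  have hall : wtSet W (outForests W (maxArcs W)) = wtSet W (knotTreesAll W K) *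
      wtSet (Wminus W K) (outForests (Wminus W K) (maxArcs (Wminus W K))) := by
    have := wtSet_filter_eq_mul hK.2 (fun _ => True) (fun _ => True) (fun _ => True)
      (fun _ _ _ _ => by simp)
    simpa [knotTreesAll_eq hK hk] using this
  have hvalue : ∀ j : Fin n, (∀ P ∈ outForests (Wminus W K) (maxArcs (Wminus W K)),
      ∃ u ∈ K, FReach P u j) →
      Jtil W k j = wtSet W (knotTrees W K k) / wtSet W (knotTreesAll W K) := by
    intro j hj
    have hfull : maxForestsTo W K j = outForests (Wminus W K) (maxArcs (Wminus W K)) :=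
      Finset.filter_true_of_mem hj
    rw [hformula j, hfull, hall, mul_div_mul_right _ _ (wtSet_max_pos _).ne']
  have hkk := hvalue k fun P _ => ⟨k, hk, Relation.ReflTransGen.refl⟩
  refine ⟨hformula, fun j hj => ⟨?_, hkk⟩⟩
  rw [hkk, hvalue j fun P hP => freach_of_mem_kplus hK hj hP]

end ForestMatrix
end
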